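/- Let (H_k)_{k=1}^N be Hermitian operators, with H_k acting on H_k and with largest and smallest eigenvalues λmax_k and λmin_k, and let H = Σ_{k=1}^N (extension of H_k to H). Then for every density matrix ρ on H, Var_ρ(H) ≤ (1/4)·((1/N)·Σ_{k=1}^N (λmax_k − λmin_k)²) · (N + 2N²·√((1/N)·Σ_{k=1}^N s_k)). (This is the paper's quantum Fisher information bound F_Q[ρ,H] ≤ Avg_k(F_Q^max[H_k])·(N + 2N²√(Avg_k s_k)) specialized to pure states, using that the QFI of a pure state equals four times the variance and that F_Q^max[H_k] = (λmax_k − λmin_k)².) -/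

import Mathlib

open scoped BigOperators Kronecker Matrix ComplexOrder

noncomputable section
namespace Paper

/-- A density matrix: a positive semidefinite operator of trace one. -/
def IsDensityMatrix {n : Type*} [Fintype n] (ρ : Matrix n n ℂ) : Prop :=
  ρ.PosSemidef ∧ ρ.trace = 1

/-- The operator norm `‖A‖_∞` (largest singular value) of a matrix,
as the operator norm of the induced map on Euclidean space. -/
noncomputable def opNorm {n : Type*} [Fintype n] [DecidableEq n] (A : Matrix n n ℂ) : ℝ :=
  ‖LinearMap.toContinuousLinearMap (Matrix.toEuclideanLin A)‖

/-- Von Neumann entropy `−∑ λ ln λ` over the eigenvalues; since `Real.log 0 = 0`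
in Mathlib, the convention `0 · ln 0 = 0` is automatic. -/
noncomputable def entropy {n : Type*} [Fintype n] [DecidableEq n] (σ : Matrix n n ℂ) : ℝ :=
  if h : σ.IsHermitian then -∑ i, h.eigenvalues i * Real.log (h.eigenvalues i) else 0

/-- The variance `Var_ρ(A) = Tr[ρ A† A] − |Tr[ρ A]|²`. -/
noncomputable def variance {n : Type*} [Fintype n] (ρ A : Matrix n n ℂ) : ℝ :=
  (ρ * (Aᴴ * A)).trace.re - ‖(ρ * A).trace‖ ^ 2

/-- The trace norm `‖A‖₁ = Tr √(A†A)`: the sum of the singular values. -/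
noncomputable def traceNorm {n : Type*} [Fintype n] [DecidableEq n] (A : Matrix n n ℂ) : ℝ :=
  ∑ i, Real.sqrt ((Matrix.posSemidef_conjTranspose_mul_self A).1.eigenvalues i)

/-- The pure state `|v⟩⟨v|` associated with a vector `v`. -/
def pureState {n : Type*} (v : n → ℂ) : Matrix n n ℂ :=
  Matrix.of fun x y => v x * (starRingEnd ℂ) (v y)

/-- The expectation value `⟨v|M|v⟩`. -/
noncomputable def expval {n : Type*} [Fintype n] (M : Matrix n n ℂ) (v : n → ℂ) : ℂ :=
  ∑ x, ∑ y, (starRingEnd ℂ) (v x) * M x y * v y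

variable {N : ℕ} {d : Fin N → Type*} [∀ k, Fintype (d k)] [∀ k, DecidableEq (d k)]

/-- Extension of a local operator on the `k`-th factor to the `N`-fold tensor
product `H = H_1 ⊗ ⋯ ⊗ H_N`, tensoring with the identity on every other factor.
(The tensor product is realized with index set `∀ j, d j`.) -/
def extendAt (k : Fin N) (A : Matrix (d k) (d k) ℂ) : Matrix (∀ j, d j) (∀ j, d j) ℂ :=
  Matrix.of fun x y => if ∀ j, j ≠ k → x j = y j then A (x k) (y k) else 0

/-- Reduced density matrix on the `k`-th factor: partial trace over all other factors. -/
noncomputable def reduce (k : Fin N) (ρ : Matrix (∀ j, d j) (∀ j, d j) ℂ) :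
    Matrix (d k) (d k) ℂ :=
  Matrix.of fun a b => ∑ x : ∀ j, d j, if x k = a then ρ x (Function.update x k b) else 0

/-!
Measuring `B` on the `l`-th factor steers the reduced state `σ` of the `k`-th factor into an
ensemble of unnormalised pure states `φ i` with `∑ i, |φ i⟩⟨φ i| = σ`, so that the covariance of
`A` and `B` becomes an average over pairs of differences of expectation values of `A`. For a pair
this difference is controlled by the overlap `⟪φ i, φ j⟫`, and since the squared overlaps add up to
the purity of `σ`, Cauchy-Schwarz gives `|Cov(A, B)| ≤ 2 ‖A‖ ‖B‖ √(1 - Tr σ²)`. The linear entropy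
`1 - Tr σ²` is at most the von Neumann entropy. It remains to expand the variance of a sum of local
terms, each centered at the midpoint of its spectrum, into covariances.
-/

section Ensemble

variable {𝕜 E : Type*} [RCLike 𝕜] [SeminormedAddCommGroup E] [InnerProductSpace 𝕜 E]

lemma norm_inner_apply_sub_inner_apply_le (T : E →L[𝕜] E) (u v : E) :
    ‖inner 𝕜 u (T u) - inner 𝕜 v (T v)‖ ≤ ‖T‖ * (‖u - v‖ * ‖u + v‖) := by
  have polarization : 2 * (inner 𝕜 u (T u) - inner 𝕜 v (T v)) =
      inner 𝕜 (u - v) (T (u + v)) + inner 𝕜 (u + v) (T (u - v)) := by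
    simp only [map_add, map_sub, inner_add_left, inner_sub_left, inner_add_right, inner_sub_right]
    ring
  have inner_apply_le (x y : E) : ‖inner 𝕜 x (T y)‖ ≤ ‖T‖ * (‖x‖ * ‖y‖) :=
    calc ‖inner 𝕜 x (T y)‖ ≤ ‖x‖ * (‖T‖ * ‖y‖) :=
          (norm_inner_le_norm _ _).trans (by gcongr; exact T.le_opNorm y)
      _ = ‖T‖ * (‖x‖ * ‖y‖) := by ring
  have hdouble : 2 * ‖inner 𝕜 u (T u) - inner 𝕜 v (T v)‖ ≤
      ‖T‖ * (‖u - v‖ * ‖u + v‖) + ‖T‖ * (‖u + v‖ * ‖u - v‖) :=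
    calc 2 * ‖inner 𝕜 u (T u) - inner 𝕜 v (T v)‖
        = ‖inner 𝕜 (u - v) (T (u + v)) + inner 𝕜 (u + v) (T (u - v))‖ := by
          rw [← polarization, norm_mul, RCLike.norm_ofNat]
      _ ≤ _ := norm_add_le_of_le (inner_apply_le _ _) (inner_apply_le _ _)
  linarith [mul_comm ‖u + v‖ ‖u - v‖]

variable (𝕜) in
lemma norm_sub_mul_norm_add_sq (u v : E) :
    (‖u - v‖ * ‖u + v‖) ^ 2 =
      (‖u‖ ^ 2 + ‖v‖ ^ 2) ^ 2 - 4 * RCLike.re (inner 𝕜 u v) ^ 2 := by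
  rw [mul_pow, norm_sub_sq (𝕜 := 𝕜), norm_add_sq (𝕜 := 𝕜)]
  ring

lemma norm_sq_mul_inner_apply_sub_le (T : E →L[𝕜] E) (u v : E) :
    ‖(‖v‖ : 𝕜) ^ 2 * inner 𝕜 u (T u) - (‖u‖ : 𝕜) ^ 2 * inner 𝕜 v (T v)‖ ≤
      2 * ‖T‖ * (‖u‖ * ‖v‖ * √((‖u‖ * ‖v‖) ^ 2 - ‖inner 𝕜 u v‖ ^ 2)) := by
  -- The left side ignores phases, so `v` may be rotated to make `⟪u, v⟫` real and nonnegative.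
  obtain ⟨c, hc, hcuv⟩ := RCLike.exists_norm_eq_mul_self (inner 𝕜 u v)
  set u' := (‖v‖ : 𝕜) • u
  set v' := ((‖u‖ : 𝕜) * c) • v
  have hcc : (starRingEnd 𝕜) c * c = 1 := by simp [RCLike.conj_mul, hc]
  have hu : inner 𝕜 u' (T u') = (‖v‖ : 𝕜) ^ 2 * inner 𝕜 u (T u) := by
    simp only [u', map_smul, inner_smul_left, inner_smul_right, RCLike.conj_ofReal]
    ring
  have hv : inner 𝕜 v' (T v') = (‖u‖ : 𝕜) ^ 2 * inner 𝕜 v (T v) := by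
    simp only [v', map_smul, inner_smul_left, inner_smul_right, map_mul, RCLike.conj_ofReal]
    linear_combination (‖u‖ : 𝕜) ^ 2 * inner 𝕜 v (T v) * hcc
  have huv : RCLike.re (inner 𝕜 u' v') = ‖u‖ * ‖v‖ * ‖inner 𝕜 u v‖ := by
    have : inner 𝕜 u' v' = ((‖u‖ * ‖v‖ * ‖inner 𝕜 u v‖ : ℝ) : 𝕜) := by
      simp only [u', v', inner_smul_left, inner_smul_right, RCLike.conj_ofReal]
      rw [RCLike.ofReal_mul, RCLike.ofReal_mul, hcuv]
      ring
    rw [this, RCLike.ofReal_re]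
  have hsq : (‖u' - v'‖ * ‖u' + v'‖) ^ 2 =
      (2 * (‖u‖ * ‖v‖)) ^ 2 * ((‖u‖ * ‖v‖) ^ 2 - ‖inner 𝕜 u v‖ ^ 2) := by
    rw [norm_sub_mul_norm_add_sq 𝕜, huv]
    simp only [u', v', norm_smul, norm_mul, RCLike.norm_ofReal, abs_norm, hc]
    ring
  calc _ = ‖inner 𝕜 u' (T u') - inner 𝕜 v' (T v')‖ := by rw [hu, hv]
    _ ≤ ‖T‖ * (‖u' - v'‖ * ‖u' + v'‖) := norm_inner_apply_sub_inner_apply_le T u' v'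
    _ = ‖T‖ * (2 * (‖u‖ * ‖v‖) * √((‖u‖ * ‖v‖) ^ 2 - ‖inner 𝕜 u v‖ ^ 2)) := by
      rw [← Real.sqrt_sq (by positivity : 0 ≤ ‖u' - v'‖ * ‖u' + v'‖), hsq,
        Real.sqrt_mul (sq_nonneg _), Real.sqrt_sq (by positivity)]
    _ = _ := by ring

lemma norm_sum_mul_inner_apply_sub_le {ι : Type*} [Fintype ι] {φ : ι → E}
    (hφ : ∑ i, ‖φ i‖ ^ 2 = 1) (b : ι → 𝕜) (T : E →L[𝕜] E) :
    ‖∑ i, b i * inner 𝕜 (φ i) (T (φ i)) -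
        (∑ i, b i * (‖φ i‖ : 𝕜) ^ 2) * ∑ j, inner 𝕜 (φ j) (T (φ j))‖ ≤
      2 * ‖T‖ * ‖b‖ * √(1 - ∑ i, ∑ j, ‖inner 𝕜 (φ i) (φ j)‖ ^ 2) := by
  set r : ι × ι → ℝ := fun p => ‖φ p.1‖ * ‖φ p.2‖
  set g : ι × ι → ℝ := fun p => r p ^ 2 - ‖inner 𝕜 (φ p.1) (φ p.2)‖ ^ 2
  have hg (p : ι × ι) : 0 ≤ g p :=
    sub_nonneg.2 (by gcongr; exact norm_inner_le_norm _ _)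
  have hr : ∑ p, r p ^ 2 = 1 := by
    simp only [r, mul_pow, Fintype.sum_prod_type, ← Finset.mul_sum, hφ, mul_one]
  have hpairs : ∑ i, b i * inner 𝕜 (φ i) (T (φ i)) -
        (∑ i, b i * (‖φ i‖ : 𝕜) ^ 2) * ∑ j, inner 𝕜 (φ j) (T (φ j)) =
      ∑ p : ι × ι, b p.1 * ((‖φ p.2‖ : 𝕜) ^ 2 * inner 𝕜 (φ p.1) (T (φ p.1)) -
        (‖φ p.1‖ : 𝕜) ^ 2 * inner 𝕜 (φ p.2) (T (φ p.2))) := by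
    have hφ' : ∑ j, (‖φ j‖ : 𝕜) ^ 2 = 1 := mod_cast congrArg (RCLike.ofReal (K := 𝕜)) hφ
    simp only [Fintype.sum_prod_type, mul_sub, Finset.sum_sub_distrib, ← Finset.mul_sum,
      ← Finset.sum_mul, ← mul_assoc, hφ', mul_one]
  calc _ ≤ ∑ p : ι × ι, ‖b‖ * (2 * ‖T‖ * (r p * √(g p))) := by
        rw [hpairs]
        refine norm_sum_le_of_le _ fun p _ => ?_
        rw [norm_mul]
        gcongr
        · exact norm_le_pi_norm b p.1
        · exact norm_sq_mul_inner_apply_sub_le T (φ p.1) (φ p.2)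
    _ = 2 * ‖T‖ * ‖b‖ * ∑ p, √(r p ^ 2) * √(g p) := by
        rw [Finset.mul_sum]
        refine Finset.sum_congr rfl fun p _ => ?_
        rw [Real.sqrt_sq (by positivity : 0 ≤ r p)]
        ring
    _ ≤ 2 * ‖T‖ * ‖b‖ * (√(∑ p, r p ^ 2) * √(∑ p, g p)) := by
        gcongr
        exact Real.sum_sqrt_mul_sqrt_le _ (fun p => sq_nonneg (r p)) hg
    _ = _ := by
        simp only [g, Finset.sum_sub_distrib, hr, Real.sqrt_one, one_mul, Fintype.sum_prod_type]

end Ensemble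

section Matrices

open scoped Matrix.Norms.L2Operator

variable {n : Type*} [Fintype n]

/-- The linear entropy `1 - Tr σ²`, one minus the purity of the state `σ`. -/
def linearEntropy (σ : Matrix n n ℂ) : ℝ :=
  1 - (σ * σ).trace.re

lemma trace_vecMulVec_star_mul_vecMulVec_star (u v : n → ℂ) :
    (Matrix.vecMulVec u (star u) * Matrix.vecMulVec v (star v)).trace =
      (‖inner ℂ (WithLp.toLp 2 u) (WithLp.toLp 2 v)‖ : ℂ) ^ 2 := by
  rw [← RCLike.ofReal_eq_complex_ofReal, ← RCLike.conj_mul, inner_conj_symm,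
    Matrix.vecMulVec_mul_vecMulVec, Matrix.trace_vecMulVec, dotProduct_smul, smul_eq_mul,
    EuclideanSpace.inner_toLp_toLp, EuclideanSpace.inner_toLp_toLp, dotProduct_comm u, mul_comm,
    dotProduct_comm v]

variable [DecidableEq n]

lemma trace_vecMulVec_star_mul (u : n → ℂ) (A : Matrix n n ℂ) :
    (Matrix.vecMulVec u (star u) * A).trace =
      inner ℂ (WithLp.toLp 2 u) (Matrix.toEuclideanCLM (𝕜 := ℂ) A (WithLp.toLp 2 u)) := by
  rw [Matrix.trace_mul_comm, Matrix.mul_vecMulVec, Matrix.trace_vecMulVec,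
    Matrix.toEuclideanCLM_toLp, EuclideanSpace.inner_toLp_toLp]

lemma norm_sum_mul_trace_sub_le {ι : Type*} [Fintype ι] {M : ι → Matrix n n ℂ}
    (hM : ∀ i, (M i).PosSemidef) (htr : (∑ i, M i).trace = 1) (b : ι → ℂ) (A : Matrix n n ℂ) :
    ‖∑ i, b i * (M i * A).trace - (∑ i, b i * (M i).trace) * ((∑ i, M i) * A).trace‖ ≤
      2 * ‖A‖ * ‖b‖ * √(linearEntropy (∑ i, M i)) := by
  choose m v hv using fun i => Matrix.posSemidef_iff_eq_sum_vecMulVec.1 (hM i)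
  set φ : (Σ i, Fin (m i)) → EuclideanSpace ℂ n := fun x => WithLp.toLp 2 (v x.1 x.2)
  have trace_mul (i : ι) (B : Matrix n n ℂ) :
      (M i * B).trace = ∑ j, inner ℂ (φ ⟨i, j⟩) (Matrix.toEuclideanCLM (𝕜 := ℂ) B (φ ⟨i, j⟩)) := by
    simp only [φ, hv i, Matrix.sum_mul, Matrix.trace_sum, trace_vecMulVec_star_mul]
  have trace_eq (i : ι) : (M i).trace = ∑ j, (‖φ ⟨i, j⟩‖ : ℂ) ^ 2 := by
    simpa using trace_mul i 1
  have hφ : ∑ x, ‖φ x‖ ^ 2 = 1 := by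
    simp only [Matrix.trace_sum, trace_eq, ← Fintype.sum_sigma'] at htr
    exact mod_cast htr
  have purity : linearEntropy (∑ i, M i) = 1 - ∑ x, ∑ y, ‖inner ℂ (φ x) (φ y)‖ ^ 2 := by
    have : ∑ i, M i = ∑ x : Σ i, Fin (m i), Matrix.vecMulVec (v x.1 x.2) (star (v x.1 x.2)) := by
      simp only [Fintype.sum_sigma, ← hv]
    rw [linearEntropy, this, Finset.sum_mul_sum]
    simp only [Matrix.trace_sum, trace_vecMulVec_star_mul_vecMulVec_star, φ, ← Complex.ofReal_pow,
      ← Complex.ofReal_sum, Complex.ofReal_re]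
  calc _ ≤ 2 * ‖A‖ * ‖fun x : Σ i, Fin (m i) => b x.1‖ * √(linearEntropy (∑ i, M i)) := by
        have := norm_sum_mul_inner_apply_sub_le hφ (fun x => b x.1)
          (Matrix.toEuclideanCLM (𝕜 := ℂ) A)
        rw [← purity, Matrix.l2_opNorm_toEuclideanCLM] at this
        simpa only [RCLike.ofReal_eq_complex_ofReal, Fintype.sum_sigma, ← Finset.mul_sum,
          ← trace_mul, ← trace_eq, ← Matrix.trace_sum, ← Matrix.sum_mul] using this
    _ ≤ _ := by
        gcongr
        exact (pi_norm_le_iff_of_nonneg (norm_nonneg b)).2 fun x => norm_le_pi_norm b x.1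

end Matrices

section Spectral

open scoped Matrix.Norms.L2Operator

variable {n : Type*} [Fintype n] [DecidableEq n] {A : Matrix n n ℂ}

lemma norm_sub_smul_one_eq (hA : A.IsHermitian) (c : ℂ) :
    ‖A - c • 1‖ = ‖fun i => (hA.eigenvalues i : ℂ) - c‖ := by
  set Φ := Unitary.conjStarAlgAut ℂ (Matrix n n ℂ) hA.eigenvectorUnitary
  have hΦ : A - c • 1 = Φ (Matrix.diagonal fun i => (hA.eigenvalues i : ℂ) - c) := by
    conv_lhs => rw [hA.spectral_theorem]
    rw [← Matrix.diagonal_sub, ← Matrix.smul_one_eq_diagonal, map_sub, map_smul, map_one]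
    rfl
  rw [hΦ, StarAlgEquiv.norm_map, Matrix.l2_opNorm_diagonal]

lemma norm_eq_norm_eigenvalues (hA : A.IsHermitian) :
    ‖A‖ = ‖fun i => (hA.eigenvalues i : ℂ)‖ := by
  simpa using norm_sub_smul_one_eq hA 0

lemma norm_sub_midpoint_smul_one_le (hA : A.IsHermitian) {l u : ℝ} (hlu : l ≤ u)
    (h : ∀ i, hA.eigenvalues i ∈ Set.Icc l u) :
    ‖A - (((l + u) / 2 : ℝ) : ℂ) • 1‖ ≤ (u - l) / 2 := by
  rw [norm_sub_smul_one_eq hA, pi_norm_le_iff_of_nonneg (by linarith)]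
  intro i
  rw [← Complex.ofReal_sub, Complex.norm_real, Real.norm_eq_abs, abs_le]
  constructor <;> linarith [(h i).1, (h i).2]

lemma exists_isStarProjection_eq_sum_eigenvalues_smul (hA : A.IsHermitian) :
    ∃ P : n → Matrix n n ℂ, (∀ i, IsStarProjection (P i)) ∧ ∑ i, P i = 1 ∧
      A = ∑ i, (hA.eigenvalues i : ℂ) • P i := by
  set Φ := Unitary.conjStarAlgAut ℂ (Matrix n n ℂ) hA.eigenvectorUnitary
  refine ⟨fun i => Φ (Matrix.single i i 1), fun i => IsStarProjection.map ⟨?_, ?_⟩ Φ, ?_, ?_⟩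
  · simp [IsIdempotentElem]
  · simp [IsSelfAdjoint, Matrix.star_eq_conjTranspose]
  · rw [← map_sum, Matrix.sum_single_one, map_one]
  · simp only [← map_smul, ← map_sum, Matrix.smul_single, smul_eq_mul, mul_one,
      Matrix.sum_single_eq_diagonal]
    exact hA.spectral_theorem

end Spectral

section Covariance

open scoped Matrix.Norms.L2Operator

variable {n : Type*} [Fintype n] {ρ : Matrix n n ℂ}

/-- The covariance `Tr[ρ X† Y] - conj (Tr[ρ X]) Tr[ρ Y]`, sesquilinear in `(X, Y)`; on the diagonal
its real part is `variance`. -/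
def covariance (ρ X Y : Matrix n n ℂ) : ℂ :=
  (ρ * (Xᴴ * Y)).trace - star (ρ * X).trace * (ρ * Y).trace

lemma variance_eq_re_covariance (ρ A : Matrix n n ℂ) : variance ρ A = (covariance ρ A A).re := by
  rw [variance, covariance, Complex.sub_re, ← starRingEnd_apply, Complex.conj_mul',
    ← Complex.ofReal_pow, Complex.ofReal_re]

lemma variance_sum {ι : Type*} [Fintype ι] (ρ : Matrix n n ℂ) (X : ι → Matrix n n ℂ) :
    variance ρ (∑ i, X i) = ∑ i, ∑ j, (covariance ρ (X i) (X j)).re := by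
  rw [variance_eq_re_covariance, covariance, Matrix.conjTranspose_sum, Finset.sum_mul_sum]
  simp only [covariance, Finset.mul_sum _ _ ρ, Matrix.trace_sum, star_sum, Finset.sum_mul_sum,
    ← Finset.sum_sub_distrib, Complex.re_sum]

lemma trace_mul_conjTranspose (hρ : ρ.IsHermitian) (X : Matrix n n ℂ) :
    (ρ * Xᴴ).trace = star (ρ * X).trace := by
  rw [← Matrix.trace_conjTranspose, Matrix.conjTranspose_mul, hρ.eq, Matrix.trace_mul_comm]

lemma covariance_comm (hρ : ρ.IsHermitian) (X Y : Matrix n n ℂ) :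
    covariance ρ Y X = star (covariance ρ X Y) := by
  rw [covariance, covariance, star_sub, star_mul', star_star,
    ← trace_mul_conjTranspose hρ (Xᴴ * Y), Matrix.conjTranspose_mul,
    Matrix.conjTranspose_conjTranspose, mul_comm (star _)]

lemma variance_sub_smul_one [DecidableEq n] (hρ : IsDensityMatrix ρ) (A : Matrix n n ℂ) (c : ℂ) :
    variance ρ (A - c • 1) = variance ρ A := by
  suffices covariance ρ (A - c • 1) (A - c • 1) = covariance ρ A A by
    rw [variance_eq_re_covariance, variance_eq_re_covariance, this]
  simp only [covariance, Matrix.conjTranspose_sub, Matrix.conjTranspose_smul,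
    Matrix.conjTranspose_one, sub_mul, mul_sub, smul_mul_assoc, mul_smul_comm, one_mul, mul_one,
    Matrix.trace_sub, Matrix.trace_smul, hρ.2, trace_mul_conjTranspose hρ.1.1, star_sub,
    smul_eq_mul]
  ring

lemma norm_trace_mul_le [DecidableEq n] (hρ : IsDensityMatrix ρ) (X : Matrix n n ℂ) :
    ‖(ρ * X).trace‖ ≤ ‖X‖ := by
  obtain ⟨m, v, hv⟩ := Matrix.posSemidef_iff_eq_sum_vecMulVec.1 hρ.1
  set φ : Fin m → EuclideanSpace ℂ n := fun j => WithLp.toLp 2 (v j)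
  have trace_mul (Y : Matrix n n ℂ) :
      (ρ * Y).trace = ∑ j, inner ℂ (φ j) (Matrix.toEuclideanCLM (𝕜 := ℂ) Y (φ j)) := by
    simp only [φ, hv, Matrix.sum_mul, Matrix.trace_sum, trace_vecMulVec_star_mul]
  have hφ : ∑ j, ‖φ j‖ ^ 2 = 1 := by
    have := trace_mul 1
    simp only [mul_one, hρ.2, map_one, one_apply_eq_self, inner_self_eq_norm_sq_to_K] at this
    exact Complex.ofReal_injective (by simpa using this.symm)
  calc ‖(ρ * X).trace‖ ≤ ∑ j, ‖X‖ * ‖φ j‖ ^ 2 := by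
        rw [trace_mul]
        refine norm_sum_le_of_le _ fun j _ => (norm_inner_le_norm _ _).trans ?_
        have := (Matrix.toEuclideanCLM (𝕜 := ℂ) X).le_opNorm (φ j)
        rw [Matrix.l2_opNorm_toEuclideanCLM] at this
        nlinarith [norm_nonneg (φ j)]
    _ = ‖X‖ := by rw [← Finset.mul_sum, hφ, mul_one]

lemma variance_le_norm_sq [DecidableEq n] (hρ : IsDensityMatrix ρ) (A : Matrix n n ℂ) :
    variance ρ A ≤ ‖A‖ ^ 2 :=
  calc variance ρ A ≤ ‖(ρ * (Aᴴ * A)).trace‖ :=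
        (sub_le_self _ (sq_nonneg _)).trans (Complex.re_le_norm _)
    _ ≤ ‖Aᴴ * A‖ := norm_trace_mul_le hρ _
    _ = ‖A‖ ^ 2 := by rw [Matrix.l2_opNorm_conjTranspose_mul_self, sq]

end Covariance

section Entropy

variable {n : Type*} [Fintype n] {σ : Matrix n n ℂ}

lemma trace_mul_self_eq_sum_eigenvalues_sq [DecidableEq n] (hσ : σ.IsHermitian) :
    (σ * σ).trace = ∑ i, (hσ.eigenvalues i : ℂ) ^ 2 := by
  conv_lhs => rw [hσ.spectral_theorem, ← map_mul, Matrix.diagonal_mul_diagonal,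
    Unitary.conjStarAlgAut_apply, Matrix.trace_mul_cycle, Unitary.coe_star_mul_self, one_mul,
    Matrix.trace_diagonal]
  simp [sq]

lemma sum_eigenvalues_eq_one [DecidableEq n] (hσ : IsDensityMatrix σ) :
    ∑ i, hσ.1.1.eigenvalues i = 1 := by
  have := hσ.1.1.trace_eq_sum_eigenvalues.symm.trans hσ.2
  exact Complex.ofReal_injective (by simpa using this)

lemma entropy_nonneg [DecidableEq n] (hσ : IsDensityMatrix σ) : 0 ≤ entropy σ := by
  rw [entropy, dif_pos hσ.1.1, ← Finset.sum_neg_distrib]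
  refine Finset.sum_nonneg fun i _ =>
    neg_nonneg.2 (Real.mul_log_nonpos (hσ.1.eigenvalues_nonneg i) ?_)
  rw [← sum_eigenvalues_eq_one hσ]
  exact Finset.single_le_sum (fun j _ => hσ.1.eigenvalues_nonneg j) (Finset.mem_univ i)

lemma linearEntropy_le_entropy [DecidableEq n] (hσ : IsDensityMatrix σ) :
    linearEntropy σ ≤ entropy σ := by
  have hsum := sum_eigenvalues_eq_one hσ
  have mul_one_sub_le (i : n) : hσ.1.1.eigenvalues i * (1 - hσ.1.1.eigenvalues i) ≤
      -(hσ.1.1.eigenvalues i * Real.log (hσ.1.1.eigenvalues i)) := by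
    obtain h | h := (hσ.1.eigenvalues_nonneg i).eq_or_lt
    · simp [← h]
    · nlinarith [Real.log_le_sub_one_of_pos h]
  rw [linearEntropy, entropy, dif_pos hσ.1.1, trace_mul_self_eq_sum_eigenvalues_sq hσ.1.1,
    ← Finset.sum_neg_distrib]
  calc _ = ∑ i, hσ.1.1.eigenvalues i * (1 - hσ.1.1.eigenvalues i) := by
        simp only [mul_sub, mul_one, Finset.sum_sub_distrib, hsum, ← sq]
        norm_cast
    _ ≤ _ := Finset.sum_le_sum fun i _ => mul_one_sub_le i

end Entropy

section Extension

omit [∀ k, Fintype (d k)] in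
lemma extendAt_eq_kronecker_submatrix (k : Fin N) (A : Matrix (d k) (d k) ℂ) :
    extendAt k A = (A ⊗ₖ 1).submatrix (Equiv.piSplitAt k d) (Equiv.piSplitAt k d) := by
  ext x y
  simp [extendAt, Matrix.one_apply, funext_iff]

/-- `extendAt k` as a morphism of star algebras. -/
def extendAtHom (k : Fin N) : Matrix (d k) (d k) ℂ →⋆ₐ[ℂ] Matrix (∀ j, d j) (∀ j, d j) ℂ where
  toFun := extendAt k
  map_one' := by
    rw [extendAt_eq_kronecker_submatrix, Matrix.one_kronecker_one, Matrix.submatrix_one_equiv]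
  map_mul' A B := by
    simp only [extendAt_eq_kronecker_submatrix, Matrix.submatrix_mul_equiv,
      ← Matrix.mul_kronecker_mul, mul_one]
  map_zero' := by
    rw [extendAt_eq_kronecker_submatrix, Matrix.zero_kronecker, Matrix.submatrix_zero]; rfl
  map_add' A B := by
    simp only [extendAt_eq_kronecker_submatrix, Matrix.add_kronecker]; rfl
  commutes' c := by
    simp only [extendAt_eq_kronecker_submatrix, Algebra.algebraMap_eq_smul_one,
      Matrix.smul_kronecker, Matrix.one_kronecker_one, Matrix.submatrix_smul, Pi.smul_apply,
      Matrix.submatrix_one_equiv]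
  map_star' A := by
    simp only [extendAt_eq_kronecker_submatrix, Matrix.star_eq_conjTranspose,
      Matrix.conjTranspose_submatrix, Matrix.conjTranspose_kronecker, Matrix.conjTranspose_one]

@[simp]
lemma coe_extendAtHom (k : Fin N) : ⇑(extendAtHom k (d := d)) = extendAt k := rfl

lemma extendAt_mul_extendAt_apply {k l : Fin N} (hkl : k ≠ l) (A : Matrix (d k) (d k) ℂ)
    (B : Matrix (d l) (d l) ℂ) (x z : ∀ j, d j) :
    (extendAt k A * extendAt l B) x z =
      if ∀ j, j ≠ k → j ≠ l → x j = z j then A (x k) (z k) * B (x l) (z l) else 0 := by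
  rw [Matrix.mul_apply, Finset.sum_eq_single (Function.update x k (z k))]
  · have agree : (∀ j, j ≠ l → Function.update x k (z k) j = z j) ↔
        ∀ j, j ≠ k → j ≠ l → x j = z j := by
      refine forall_congr' fun j => ?_
      by_cases hj : j = k
      · subst hj; simp
      · simp [hj]
    simp +contextual [extendAt, agree, hkl.symm]
  · intro y _ hy
    simp only [extendAt, Matrix.of_apply, mul_ite, ite_mul, mul_zero, zero_mul]
    split_ifs with hyz hxy
    · refine absurd (funext fun j => ?_) hy
      by_cases hj : j = k
      · subst hj; simp [hyz j hkl]
      · simp [hj, hxy j hj]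
    all_goals rfl
  · simp

lemma commute_extendAt_extendAt {k l : Fin N} (hkl : k ≠ l) (A : Matrix (d k) (d k) ℂ)
    (B : Matrix (d l) (d l) ℂ) : Commute (extendAt k A) (extendAt l B) := by
  ext x z
  rw [extendAt_mul_extendAt_apply hkl, extendAt_mul_extendAt_apply hkl.symm]
  exact if_congr ⟨fun h j hl hk => h j hk hl, fun h j hk hl => h j hl hk⟩ (mul_comm _ _) rfl

lemma reduce_eq_sum_submatrix (k : Fin N) (ρ : Matrix (∀ j, d j) (∀ j, d j) ℂ) :
    reduce k ρ = ∑ r, ρ.submatrix (fun a => (Equiv.piSplitAt k d).symm (a, r))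
      (fun a => (Equiv.piSplitAt k d).symm (a, r)) := by
  have update_symm (a b : d k) (r : ∀ j : {j // j ≠ k}, d j) :
      Function.update ((Equiv.piSplitAt k d).symm (a, r)) k b =
        (Equiv.piSplitAt k d).symm (b, r) := by
    ext j
    by_cases hj : j = k
    · subst hj; simp
    · simp [hj]
  ext a b
  simp only [reduce, Matrix.of_apply, Matrix.sum_apply, Matrix.submatrix_apply]
  rw [← (Equiv.piSplitAt k d).symm.sum_comp, Fintype.sum_prod_type_right]
  simp [update_symm]

lemma posSemidef_reduce (k : Fin N) {ρ : Matrix (∀ j, d j) (∀ j, d j) ℂ} (hρ : ρ.PosSemidef) :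
    (reduce k ρ).PosSemidef := by
  rw [reduce_eq_sum_submatrix]
  exact Matrix.posSemidef_sum _ fun r _ => hρ.submatrix _

lemma trace_mul_extendAt (k : Fin N) (ρ : Matrix (∀ j, d j) (∀ j, d j) ℂ)
    (A : Matrix (d k) (d k) ℂ) : (ρ * extendAt k A).trace = (reduce k ρ * A).trace := by
  set e := Equiv.piSplitAt k d
  calc (ρ * extendAt k A).trace
      = ∑ p, ∑ q, ρ (e.symm p) (e.symm q) * (A ⊗ₖ (1 : Matrix _ _ ℂ)) q p := by
        rw [extendAt_eq_kronecker_submatrix, Matrix.trace, ← e.symm.sum_comp]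
        refine Finset.sum_congr rfl fun p _ => ?_
        rw [Matrix.diag_apply, Matrix.mul_apply, ← e.symm.sum_comp]
        simp only [Matrix.submatrix_apply, e, Equiv.apply_symm_apply]
    _ = ∑ r, ∑ a, ∑ b, ρ (e.symm (a, r)) (e.symm (b, r)) * A b a := by
        rw [Fintype.sum_prod_type_right]
        simp only [Fintype.sum_prod_type, Matrix.kronecker_apply, Matrix.one_apply, mul_ite,
          mul_one, mul_zero, Finset.sum_ite_eq', Finset.mem_univ, if_true]
    _ = (reduce k ρ * A).trace := by
        rw [reduce_eq_sum_submatrix, Matrix.sum_mul, Matrix.trace_sum]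
        simp only [Matrix.trace, Matrix.diag_apply, Matrix.mul_apply, Matrix.submatrix_apply, e]

lemma isDensityMatrix_reduce (k : Fin N) {ρ : Matrix (∀ j, d j) (∀ j, d j) ℂ}
    (hρ : IsDensityMatrix ρ) : IsDensityMatrix (reduce k ρ) := by
  refine ⟨posSemidef_reduce k hρ.1, ?_⟩
  rw [← hρ.2, ← mul_one (reduce k ρ), ← trace_mul_extendAt, ← coe_extendAtHom, map_one, mul_one]

end Extension

section Steering

open scoped Matrix.Norms.L2Operator

variable {ρ : Matrix (∀ j, d j) (∀ j, d j) ℂ} {k l : Fin N}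

/-- The unnormalised state to which the `k`-th factor is steered when a measurement of the `l`-th
factor in the state `ρ` has the outcome given by the projection `P`. -/
def steeredState (ρ : Matrix (∀ j, d j) (∀ j, d j) ℂ) (k : Fin N) {l : Fin N}
    (P : Matrix (d l) (d l) ℂ) : Matrix (d k) (d k) ℂ :=
  reduce k (extendAt l P * ρ * extendAt l P)

lemma posSemidef_steeredState (hρ : ρ.PosSemidef) {P : Matrix (d l) (d l) ℂ}
    (hP : IsStarProjection P) : (steeredState ρ k P).PosSemidef := by
  have hE : (extendAt l P)ᴴ = extendAt l P := (hP.map (extendAtHom l)).isSelfAdjoint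
  refine posSemidef_reduce k ?_
  simpa only [hE] using hρ.conjTranspose_mul_mul_same (extendAt l P)

lemma trace_steeredState_mul (ρ : Matrix (∀ j, d j) (∀ j, d j) ℂ) (hkl : k ≠ l)
    {P : Matrix (d l) (d l) ℂ} (hP : IsStarProjection P) (A : Matrix (d k) (d k) ℂ) :
    (steeredState ρ k P * A).trace = (ρ * (extendAt k A * extendAt l P)).trace := by
  have hE : extendAt l P * extendAt l P = extendAt l P :=
    (hP.map (extendAtHom l)).isIdempotentElem
  rw [steeredState, ← trace_mul_extendAt, mul_assoc, ← (commute_extendAt_extendAt hkl A P).eq,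
    mul_assoc, Matrix.trace_mul_comm, mul_assoc, mul_assoc, hE]

lemma sum_steeredState {ι : Type*} [Fintype ι] (ρ : Matrix (∀ j, d j) (∀ j, d j) ℂ) (hkl : k ≠ l)
    {P : ι → Matrix (d l) (d l) ℂ} (hP : ∀ i, IsStarProjection (P i)) (hsum : ∑ i, P i = 1) :
    ∑ i, steeredState ρ k (P i) = reduce k ρ := by
  have hE : ∑ i, extendAt l (P i) = 1 := by
    simp only [← coe_extendAtHom, ← map_sum, hsum, map_one]
  refine Matrix.ext_iff_trace_mul_right.2 fun A => ?_
  simp only [Matrix.sum_mul, Matrix.trace_sum, trace_steeredState_mul ρ hkl (hP _)]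
  rw [← Matrix.trace_sum, ← Matrix.mul_sum, ← Matrix.mul_sum, hE, mul_one, trace_mul_extendAt]

lemma norm_covariance_extendAt_le (hρ : IsDensityMatrix ρ) (hkl : k ≠ l)
    (A : Matrix (d k) (d k) ℂ) {B : Matrix (d l) (d l) ℂ} (hB : B.IsHermitian) :
    ‖covariance ρ (extendAt k A) (extendAt l B)‖ ≤
      2 * ‖A‖ * ‖B‖ * √(linearEntropy (reduce k ρ)) := by
  obtain ⟨P, hP, hsum, hBP⟩ := exists_isStarProjection_eq_sum_eigenvalues_smul hB
  set b : d l → ℂ := fun i => hB.eigenvalues i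
  have hσ := sum_steeredState ρ hkl hP hsum
  have extendAt_B : extendAt l B = ∑ i, b i • extendAt l (P i) := by
    conv_lhs => rw [hBP]
    simp only [← coe_extendAtHom, map_sum, map_smul, b]
  have trace_mul_B (X : Matrix (d k) (d k) ℂ) :
      (ρ * (extendAt k X * extendAt l B)).trace =
        ∑ i, b i * (steeredState ρ k (P i) * X).trace := by
    simp only [extendAt_B, Matrix.mul_sum, Matrix.trace_sum, mul_smul_comm, Matrix.trace_smul,
      smul_eq_mul, trace_steeredState_mul ρ hkl (hP _)]
  have trace_B : (ρ * extendAt l B).trace = ∑ i, b i * (steeredState ρ k (P i)).trace := by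
    simpa only [← coe_extendAtHom, map_one, one_mul, mul_one] using trace_mul_B 1
  have extendAt_conj : (extendAt k A)ᴴ = extendAt k Aᴴ := (map_star (extendAtHom k) A).symm
  have key := norm_sum_mul_trace_sub_le (fun i => posSemidef_steeredState hρ.1 (hP i))
    (hσ ▸ (isDensityMatrix_reduce k hρ).2) b Aᴴ
  rw [hσ, ← trace_mul_B, ← trace_B, ← trace_mul_extendAt, Matrix.l2_opNorm_conjTranspose,
    ← norm_eq_norm_eigenvalues hB] at key
  rwa [covariance, ← trace_mul_conjTranspose hρ.1.1, extendAt_conj,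
    mul_comm (ρ * extendAt k Aᴴ).trace]

lemma norm_extendAt_le (k : Fin N) (A : Matrix (d k) (d k) ℂ) : ‖extendAt k A‖ ≤ ‖A‖ :=
  NonUnitalStarAlgHom.norm_apply_le (extendAtHom k) A

lemma re_covariance_extendAt_le (hρ : IsDensityMatrix ρ) (hkl : k ≠ l)
    {A : Matrix (d k) (d k) ℂ} (hA : A.IsHermitian) {B : Matrix (d l) (d l) ℂ}
    (hB : B.IsHermitian) :
    (covariance ρ (extendAt k A) (extendAt l B)).re ≤
      ‖A‖ ^ 2 * √(linearEntropy (reduce l ρ)) + ‖B‖ ^ 2 * √(linearEntropy (reduce k ρ)) := by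
  have hk := norm_covariance_extendAt_le hρ hkl A hB
  have hl := norm_covariance_extendAt_le hρ hkl.symm B hA
  rw [covariance_comm hρ.1.1, norm_star] at hl
  set x := √(linearEntropy (reduce k ρ))
  set y := √(linearEntropy (reduce l ρ))
  have amgm : 2 * ‖A‖ * ‖B‖ ≤ ‖A‖ ^ 2 + ‖B‖ ^ 2 := two_mul_le_add_sq _ _
  have min_nonneg : 0 ≤ min x y := le_min (Real.sqrt_nonneg _) (Real.sqrt_nonneg _)
  calc _ ≤ 2 * ‖A‖ * ‖B‖ * min x y := by
        refine (Complex.re_le_norm _).trans ?_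
        rw [mul_min_of_nonneg _ _ (by positivity)]
        exact le_min hk (hl.trans_eq (by ring))
    _ ≤ (‖A‖ ^ 2 + ‖B‖ ^ 2) * min x y := mul_le_mul_of_nonneg_right amgm min_nonneg
    _ ≤ ‖A‖ ^ 2 * y + ‖B‖ ^ 2 * x := by
        rw [add_mul]
        gcongr
        · exact min_le_right x y
        · exact min_le_left x y

theorem variance_sum_extendAt_le (hρ : IsDensityMatrix ρ) {A : ∀ k, Matrix (d k) (d k) ℂ}
    (hA : ∀ k, (A k).IsHermitian) :
    variance ρ (∑ k, extendAt k (A k)) ≤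
      (∑ k, ‖A k‖ ^ 2) * (1 + 2 * ∑ k, √(linearEntropy (reduce k ρ))) := by
  set x : Fin N → ℝ := fun k => √(linearEntropy (reduce k ρ))
  have pair_le (k l : Fin N) : (covariance ρ (extendAt k (A k)) (extendAt l (A l))).re ≤
      (if k = l then ‖A k‖ ^ 2 else 0) + (‖A k‖ ^ 2 * x l + ‖A l‖ ^ 2 * x k) := by
    split_ifs with hkl
    · subst hkl
      calc _ ≤ ‖extendAt k (A k)‖ ^ 2 :=
            (variance_eq_re_covariance _ _).symm.trans_le (variance_le_norm_sq hρ _)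
        _ ≤ ‖A k‖ ^ 2 := by gcongr; exact norm_extendAt_le k (A k)
        _ ≤ _ := le_add_of_nonneg_right (by simp only [x]; positivity)
    · rw [zero_add]
      exact re_covariance_extendAt_le hρ hkl (hA k) (hA l)
  calc _ = ∑ k, ∑ l, (covariance ρ (extendAt k (A k)) (extendAt l (A l))).re := variance_sum ρ _
    _ ≤ ∑ k, ∑ l, ((if k = l then ‖A k‖ ^ 2 else 0) + (‖A k‖ ^ 2 * x l + ‖A l‖ ^ 2 * x k)) := by
        gcongr with k _ l _
        exact pair_le k l
    _ = (∑ k, ‖A k‖ ^ 2) * (1 + 2 * ∑ k, x k) := by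
        simp only [Finset.sum_add_distrib, Finset.sum_ite_eq, Finset.mem_univ, if_true,
          ← Finset.mul_sum, ← Finset.sum_mul]
        ring

lemma variance_sum_extendAt_sub_smul_one (hρ : IsDensityMatrix ρ)
    (A : ∀ k, Matrix (d k) (d k) ℂ) (c : Fin N → ℂ) :
    variance ρ (∑ k, extendAt k (A k - c k • 1)) = variance ρ (∑ k, extendAt k (A k)) := by
  rw [← variance_sub_smul_one hρ (∑ k, extendAt k (A k)) (∑ k, c k)]
  simp only [← coe_extendAtHom, map_sub, map_smul, map_one, Finset.sum_sub_distrib, Finset.sum_smul]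

theorem variance_sum_extendAt_le_sum_half_gap_sq (hρ : IsDensityMatrix ρ)
    {A : ∀ k, Matrix (d k) (d k) ℂ} (hA : ∀ k, (A k).IsHermitian) {a b : Fin N → ℝ}
    (hab : ∀ k, a k ≤ b k) (h : ∀ k i, (hA k).eigenvalues i ∈ Set.Icc (a k) (b k)) :
    variance ρ (∑ k, extendAt k (A k)) ≤
      (∑ k, ((b k - a k) / 2) ^ 2) * (1 + 2 * ∑ k, √(linearEntropy (reduce k ρ))) := by
  set c : Fin N → ℂ := fun k => ((a k + b k) / 2 : ℝ)
  have hc (k : Fin N) : (A k - c k • 1).IsHermitian :=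
    (hA k).sub (Matrix.isHermitian_one.smul (Complex.conj_ofReal _))
  calc _ = variance ρ (∑ k, extendAt k (A k - c k • 1)) :=
        (variance_sum_extendAt_sub_smul_one hρ A c).symm
    _ ≤ (∑ k, ‖A k - c k • 1‖ ^ 2) * (1 + 2 * ∑ k, √(linearEntropy (reduce k ρ))) :=
        variance_sum_extendAt_le hρ hc
    _ ≤ _ := by
        gcongr with k
        exact norm_sub_midpoint_smul_one_le (hA k) (hab k) (h k)

end Steering

lemma sum_sqrt_le_card_mul_sqrt_mean {ι : Type*} [Fintype ι] {s : ι → ℝ} (hs : ∀ i, 0 ≤ s i) :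
    ∑ i, √(s i) ≤ Fintype.card ι * √(1 / Fintype.card ι * ∑ i, s i) :=
  calc ∑ i, √(s i) = ∑ i, √1 * √(s i) := by simp only [Real.sqrt_one, one_mul]
    _ ≤ √(∑ _i : ι, 1) * √(∑ i, s i) :=
        Real.sum_sqrt_mul_sqrt_le _ (fun _ => zero_le_one) hs
    _ = Fintype.card ι * √(1 / Fintype.card ι * ∑ i, s i) := by
        rw [Real.sqrt_mul (by positivity), Real.sqrt_div zero_le_one, Real.sqrt_one, ← mul_assoc,
          mul_one_div, Real.div_sqrt, Finset.sum_const, Finset.card_univ, nsmul_one]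

/-- QFI bound, Lemma 2a of the paper, specialized to pure states via
`F_Q ≤ 4·Var`. For Hermitian operators `H_k` on `H_k` with largest and smallest
eigenvalues `λmax_k` and `λmin_k`, and `H = Σ_k (extension of H_k to H)`, every density
matrix `ρ` on `H` satisfies
`Var_ρ(H) ≤ (1/4)·((1/N)·Σ_k (λmax_k − λmin_k)²) · (N + 2N²·√((1/N)·Σ_k s_k))`. -/
theorem variance_hermitian_le_avg_gap_sq_mul_entropy_factor
    [∀ k, Nonempty (d k)] (hN : 1 ≤ N)
    (H : ∀ k, Matrix (d k) (d k) ℂ) (hH : ∀ k, (H k).IsHermitian)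
    (lmax lmin : Fin N → ℝ)
    (hmax : ∀ k, IsGreatest (Set.range (hH k).eigenvalues) (lmax k))
    (hmin : ∀ k, IsLeast (Set.range (hH k).eigenvalues) (lmin k))
    (ρ : Matrix (∀ j, d j) (∀ j, d j) ℂ) (hρ : IsDensityMatrix ρ) :
    variance ρ (∑ k, extendAt k (H k)) ≤
      (1 / 4 : ℝ) * ((1 / (N : ℝ)) * ∑ k, (lmax k - lmin k) ^ 2) *
        ((N : ℝ) + 2 * (N : ℝ) ^ 2 *
          Real.sqrt ((1 / (N : ℝ)) * ∑ k, entropy (reduce k ρ))) := by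
  have hσ (k : Fin N) : IsDensityMatrix (reduce k ρ) := isDensityMatrix_reduce k hρ
  calc _ ≤ (∑ k, ((lmax k - lmin k) / 2) ^ 2) * (1 + 2 * ∑ k, √(linearEntropy (reduce k ρ))) :=
        variance_sum_extendAt_le_sum_half_gap_sq hρ hH (fun k => (hmin k).2 (hmax k).1)
          fun k i => ⟨(hmin k).2 ⟨i, rfl⟩, (hmax k).2 ⟨i, rfl⟩⟩
    _ ≤ (∑ k, ((lmax k - lmin k) / 2) ^ 2) * (1 + 2 * ∑ k, √(entropy (reduce k ρ))) := by
        gcongr with k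
        exact linearEntropy_le_entropy (hσ k)
    _ ≤ (∑ k, ((lmax k - lmin k) / 2) ^ 2) *
          (1 + 2 * (N * √(1 / N * ∑ k, entropy (reduce k ρ)))) := by
        gcongr
        simpa only [Fintype.card_fin] using
          sum_sqrt_le_card_mul_sqrt_mean fun k => entropy_nonneg (hσ k)
    _ = _ := by
        have hN' : (N : ℝ) ≠ 0 := Nat.cast_ne_zero.2 (by lia)
        simp only [div_pow, ← Finset.sum_div]
        field_simp
        ring

end Paper
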